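/- arXiv:2208.00643 — 4 statements merged into one kernel-verified Lean document; each statement's English description precedes it below -/
import Mathlib

section
/- Under the definitions below, for every k the SINR of the common stream at user k defined from the quantized received signal, γ_{c,k}^{orig} = P α_{ADC,k}² |h_k^H Φ_α f_0|² / (P α_{ADC,k}² Σ_{i=1}^K |h_k^H Φ_α f_i|² + QE_k + α_{ADC,k}² σ²), equals the reformulated expression γ_{c,k}(F) = α_{ADC,k} |h_k^H Φ_α f_0|² / (Σ_{i=0}^K |h_k^H Φ_α f_i|² − α_{ADC,k} |h_k^H Φ_α f_0|² + Σ_{i=0}^K f_i^H Φ_α Φ_β diag(h_k h_k^H) f_i + σ²/P). -/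
open Matrix

/-- `diagOf M` is the diagonal matrix whose diagonal coincides with that of `M`. -/
def diagOf {N : ℕ} (M : Matrix (Fin N) (Fin N) ℂ) : Matrix (Fin N) (Fin N) ℂ :=
  Matrix.diagonal fun n => M n n

/-- `outer u = u uᴴ`. -/
def outer {N : ℕ} (u : Fin N → ℂ) : Matrix (Fin N) (Fin N) ℂ :=
  Matrix.vecMulVec u (star u)

/-- The quadratic form of `M Mᴴ` at `u` is the sum of the squared moduli of `uᴴ` against the
columns of `M`. -/
lemma star_dotProduct_mul_conjTranspose_mulVec {m n : Type*} [Fintype m] [Fintype n]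
    (M : Matrix m n ℂ) (u : m → ℂ) :
    star u ⬝ᵥ (M * Mᴴ).mulVec u =
      ((∑ i, Complex.normSq (star u ⬝ᵥ M.col i) : ℝ) : ℂ) := by
  rw [← mulVec_mulVec, dotProduct_mulVec, dotProduct, Complex.ofReal_sum]
  refine Finset.sum_congr rfl fun i _ => ?_
  rw [← Complex.mul_conj]
  congr 1
  simp [mulVec, dotProduct, mul_comm]

/-- Exchanging the roles of the vector and the columns of `F` in a diagonal quadratic form. -/
lemma star_dotProduct_diagonal_mul_diagOf_mulVec {N : ℕ} {ι : Type*} [Fintype ι]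
    (d : Fin N → ℂ) (c : ℂ) (F : Matrix (Fin N) ι ℂ) (u : Fin N → ℂ) :
    star u ⬝ᵥ (diagonal d * diagOf (c • (F * Fᴴ))).mulVec u =
      c * ∑ i, star (F.col i) ⬝ᵥ (diagonal d * diagOf (outer u)).mulVec (F.col i) := by
  simp only [diagOf, outer, diagonal_mul_diagonal, dotProduct, mulVec_diagonal,
    Matrix.smul_apply, mul_apply, conjTranspose_apply, vecMulVec_apply, Pi.star_apply, smul_eq_mul,
    col_apply]
  rw [Finset.sum_comm, Finset.mul_sum]
  refine Finset.sum_congr rfl fun n _ => ?_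
  simp only [Finset.mul_sum, Finset.sum_mul]
  exact Finset.sum_congr rfl fun i _ => by ring

/-- The SINR of the common stream at user `k` defined from the quantized received signal equals
the reformulated expression `γ_{c,k}(F)` of the paper. -/
theorem common_stream_sinr_reformulation
    (N K : ℕ) (hN : 0 < N) (hK : 0 < K)
    (h : Fin K → Fin N → ℂ) (f : Fin (K + 1) → Fin N → ℂ)
    (F : Matrix (Fin N) (Fin (K + 1)) ℂ) (hF : ∀ n i, F n i = f i n)
    (αD : Fin N → ℝ) (hαD : ∀ n, αD n ∈ Set.Ioc (0 : ℝ) 1)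
    (αA : Fin K → ℝ) (hαA : ∀ k, αA k ∈ Set.Ioc (0 : ℝ) 1)
    (βA : Fin K → ℝ) (hβA : ∀ k, βA k = 1 - αA k)
    (P σ2 : ℝ) (hP : 0 < P) (hσ2 : 0 < σ2)
    (Φα Φβ : Matrix (Fin N) (Fin N) ℂ)
    (hΦα : Φα = Matrix.diagonal fun n => (αD n : ℂ))
    (hΦβ : Φβ = 1 - Φα)
    (RqDAC Cx : Matrix (Fin N) (Fin N) ℂ)
    (hR : RqDAC = Φα * Φβ * diagOf ((P : ℂ) • (F * Fᴴ)))
    (hC : Cx = (P : ℂ) • (Φα * F * Fᴴ * Φαᴴ) + RqDAC)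
    (rqADC QE : Fin K → ℂ)
    (hrq : ∀ k, rqADC k = ((αA k * βA k : ℝ) : ℂ) *
      (star (h k) ⬝ᵥ Cx.mulVec (h k) + (σ2 : ℂ)))
    (hQE : ∀ k, QE k = ((αA k ^ 2 : ℝ) : ℂ) *
      (star (h k) ⬝ᵥ RqDAC.mulVec (h k)) + rqADC k) :
    ∀ k : Fin K,
      ((P * αA k ^ 2 * Complex.normSq (star (h k) ⬝ᵥ Φα.mulVec (f 0)) : ℝ) : ℂ) /
          (((P * αA k ^ 2 *
              ∑ i : Fin K, Complex.normSq (star (h k) ⬝ᵥ Φα.mulVec (f i.succ)) : ℝ) : ℂ)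
            + QE k + ((αA k ^ 2 * σ2 : ℝ) : ℂ)) =
        ((αA k * Complex.normSq (star (h k) ⬝ᵥ Φα.mulVec (f 0)) : ℝ) : ℂ) /
          (((∑ i : Fin (K + 1), Complex.normSq (star (h k) ⬝ᵥ Φα.mulVec (f i)) : ℝ) : ℂ)
            - ((αA k * Complex.normSq (star (h k) ⬝ᵥ Φα.mulVec (f 0)) : ℝ) : ℂ)
            + (∑ i : Fin (K + 1),
                star (f i) ⬝ᵥ (Φα * Φβ * diagOf (outer (h k))).mulVec (f i))
            + ((σ2 / P : ℝ) : ℂ)) := by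
  intro k
  have hcol : ∀ i, F.col i = f i := fun i => funext fun n => hF n i
  have hsignal : star (h k) ⬝ᵥ (Φα * F * Fᴴ * Φαᴴ).mulVec (h k) =
      ((∑ i, Complex.normSq (star (h k) ⬝ᵥ Φα.mulVec (f i)) : ℝ) : ℂ) := by
    rw [Matrix.mul_assoc (Φα * F), ← conjTranspose_mul,
      star_dotProduct_mul_conjTranspose_mulVec]
    simp only [← hcol]
    rfl
  have hdiag : Φα * Φβ = diagonal fun n => (αD n : ℂ) * (1 - αD n) := by
    rw [hΦβ, hΦα, ← diagonal_one, diagonal_sub, diagonal_mul_diagonal]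
  have hquant : star (h k) ⬝ᵥ RqDAC.mulVec (h k) = (P : ℂ) *
      ∑ i, star (f i) ⬝ᵥ (Φα * Φβ * diagOf (outer (h k))).mulVec (f i) := by
    rw [hR, hdiag, star_dotProduct_diagonal_mul_diagOf_mulVec]
    simp only [hcol]
  have hP' : (P : ℂ) ≠ 0 := mod_cast hP.ne'
  have hα' : (αA k : ℂ) ≠ 0 := mod_cast (hαA k).1.ne'
  rw [hQE, hrq, hC, add_mulVec, smul_mulVec, dotProduct_add, dotProduct_smul, hsignal, hquant,
    hβA, Fin.sum_univ_succ (fun i => Complex.normSq (star (h k) ⬝ᵥ Φα.mulVec (f i)))]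
  refine Eq.trans ?_ (mul_div_mul_left _ _ (mul_ne_zero hP' hα'))
  push_cast
  rw [smul_eq_mul]
  congr 1
  · ring
  · field_simp
    ring
end

section
/- (Lemma 1, algebraic form.) Let A_{c,1},…,A_{c,K}, B_{c,1},…,B_{c,K}, A_1,…,A_K, B_1,…,B_K be Hermitian positive definite matrices in ℂ^{n×n}, let τ > 0, and let w ∈ ℂ^n be nonzero. With r_k(w), μ_k(w), λ_num(w), λ_den(w), λ(w), A_KKT(w), B_KKT(w) defined as in the context, the stationarity equation Σ_{k=1}^K μ_k(w)·( A_{c,k} w/(w^H A_{c,k} w) − B_{c,k} w/(w^H B_{c,k} w) ) + Σ_{k=1}^K ( A_k w/(w^H A_k w) − B_k w/(w^H B_k w) ) = 0 holds if and only if A_KKT(w)·w = λ(w)·B_KKT(w)·w, equivalently (since B_KKT(w) is invertible) B_KKT(w)^{−1} A_KKT(w)·w = λ(w)·w; i.e., the first-order optimality condition of the smoothed sum-spectral-efficiency maximization is a nonlinear eigenvalue problem. -/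
open Matrix
open scoped ComplexOrder

/-- The real quadratic form of a positive definite matrix is positive at nonzero vectors. -/
lemma re_star_dotProduct_mulVec_pos {ι : Type*} [Fintype ι] {M : Matrix ι ι ℂ}
    (hM : M.PosDef) {x : ι → ℂ} (hx : x ≠ 0) : 0 < (star x ⬝ᵥ M.mulVec x).re :=
  (Complex.lt_def.mp (hM.dotProduct_mulVec_pos hx)).1

/-- A positive combination of positive definite matrices over a nonempty index type is positive
definite. -/
lemma posDef_sum_ofReal_smul {ι κ : Type*} [Fintype κ] [Nonempty κ]
    {c : κ → ℝ} {M : κ → Matrix ι ι ℂ} (hc : ∀ k, 0 < c k) (hM : ∀ k, (M k).PosDef) :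
    (∑ k, (c k : ℂ) • M k).PosDef :=
  Matrix.posDef_sum Finset.univ_nonempty fun k _ =>
    (hM k).smul (Complex.zero_lt_real.mpr (hc k))

/-- (Lemma 1, algebraic form.) The stationarity equation of the smoothed sum-spectral-efficiency
objective holds iff `A_KKT(w) w = λ(w) B_KKT(w) w`, equivalently (since `B_KKT(w)` is
invertible) `B_KKT(w)⁻¹ A_KKT(w) w = λ(w) w`: the first-order optimality condition is a
nonlinear eigenvalue problem. -/
theorem lemma1_algebraic_form
    (n K : ℕ) (hn : 0 < n) (hK : 0 < K)
    (Ac Bc A B : Fin K → Matrix (Fin n) (Fin n) ℂ)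
    (hAcH : ∀ k, (Ac k).PosDef) (hBcH : ∀ k, (Bc k).PosDef)
    (hAH : ∀ k, (A k).PosDef) (hBH : ∀ k, (B k).PosDef)
    (τ : ℝ) (hτ : 0 < τ)
    (w : Fin n → ℂ) (hw : w ≠ 0)
    (qAc qBc qA qB : Fin K → ℝ)
    (hqAc : ∀ k, qAc k = (star w ⬝ᵥ (Ac k).mulVec w).re)
    (hqBc : ∀ k, qBc k = (star w ⬝ᵥ (Bc k).mulVec w).re)
    (hqA : ∀ k, qA k = (star w ⬝ᵥ (A k).mulVec w).re)
    (hqB : ∀ k, qB k = (star w ⬝ᵥ (B k).mulVec w).re)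
    (r μ : Fin K → ℝ)
    (hr : ∀ k, r k = qAc k / qBc k)
    (hμ : ∀ k, μ k = r k ^ (-(1 / (τ * Real.log 2))) /
      ∑ l, r l ^ (-(1 / (τ * Real.log 2))))
    (lamNum lamDen lam : ℝ)
    (hlamNum : lamNum = ∏ k, qA k)
    (hlamDen : lamDen =
      ((1 / (K * Real.log 2)) * ∑ k, r k ^ (-(1 / τ))) ^ (τ / Real.log 2) * ∏ k, qB k)
    (hlam : lam = lamNum / lamDen)
    (AKKT BKKT : Matrix (Fin n) (Fin n) ℂ)
    (hAKKT : AKKT = (lamNum : ℂ) •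
      (∑ k, ((μ k / qAc k : ℝ) : ℂ) • Ac k + ∑ k, (((qA k)⁻¹ : ℝ) : ℂ) • A k))
    (hBKKT : BKKT = (lamDen : ℂ) •
      (∑ k, ((μ k / qBc k : ℝ) : ℂ) • Bc k + ∑ k, (((qB k)⁻¹ : ℝ) : ℂ) • B k)) :
    ((∑ k, (μ k : ℂ) • ((((qAc k)⁻¹ : ℝ) : ℂ) • (Ac k).mulVec w
            - (((qBc k)⁻¹ : ℝ) : ℂ) • (Bc k).mulVec w)
          + ∑ k, ((((qA k)⁻¹ : ℝ) : ℂ) • (A k).mulVec w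
            - (((qB k)⁻¹ : ℝ) : ℂ) • (B k).mulVec w)) = 0
        ↔ AKKT.mulVec w = (lam : ℂ) • BKKT.mulVec w) ∧
      (AKKT.mulVec w = (lam : ℂ) • BKKT.mulVec w
        ↔ (BKKT⁻¹ * AKKT).mulVec w = (lam : ℂ) • w) := by
  have : Nonempty (Fin K) := ⟨⟨0, hK⟩⟩
  have hlog : 0 < Real.log 2 := Real.log_pos one_lt_two
  have hqAc_pos k : 0 < qAc k := hqAc k ▸ re_star_dotProduct_mulVec_pos (hAcH k) hw
  have hqBc_pos k : 0 < qBc k := hqBc k ▸ re_star_dotProduct_mulVec_pos (hBcH k) hw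
  have hqA_pos k : 0 < qA k := hqA k ▸ re_star_dotProduct_mulVec_pos (hAH k) hw
  have hqB_pos k : 0 < qB k := hqB k ▸ re_star_dotProduct_mulVec_pos (hBH k) hw
  have hr_pos k : 0 < r k := hr k ▸ div_pos (hqAc_pos k) (hqBc_pos k)
  have hsum_pos (p : ℝ) : 0 < ∑ l, r l ^ p :=
    Finset.sum_pos (fun l _ => Real.rpow_pos_of_pos (hr_pos l) _) Finset.univ_nonempty
  have hμ_pos k : 0 < μ k := hμ k ▸ div_pos (Real.rpow_pos_of_pos (hr_pos k) _) (hsum_pos _)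
  have hNum : 0 < lamNum := hlamNum ▸ Finset.prod_pos fun k _ => hqA_pos k
  have hDen : 0 < lamDen := by
    have hK' : (0 : ℝ) < K := Nat.cast_pos.mpr hK
    rw [hlamDen]
    exact mul_pos (Real.rpow_pos_of_pos (mul_pos (by positivity) (hsum_pos _)) _)
      (Finset.prod_pos fun k _ => hqB_pos k)
  have hB_posDef : BKKT.PosDef := by
    rw [hBKKT]
    exact ((posDef_sum_ofReal_smul (fun k => div_pos (hμ_pos k) (hqBc_pos k)) hBcH).add
      (posDef_sum_ofReal_smul (fun k => inv_pos.mpr (hqB_pos k)) hBH)).smul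
        (Complex.zero_lt_real.mpr hDen)
  have hB_det : IsUnit BKKT.det := (Matrix.isUnit_iff_isUnit_det _).mp hB_posDef.isUnit
  refine ⟨?_, ?_⟩
  · have hNum' : (lamNum : ℂ) ≠ 0 := Complex.ofReal_ne_zero.mpr hNum.ne'
    have hDen' : (lamDen : ℂ) ≠ 0 := Complex.ofReal_ne_zero.mpr hDen.ne'
    have hlamDen_mul : (lam : ℂ) * lamDen = lamNum := by
      rw [hlam, Complex.ofReal_div, div_mul_cancel₀ _ hDen']
    rw [hAKKT, hBKKT, Matrix.smul_mulVec, Matrix.smul_mulVec, smul_smul, hlamDen_mul,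
      (smul_right_injective _ hNum').eq_iff, ← sub_eq_zero (b := _ *ᵥ w)]
    refine Eq.congr_left ?_
    simp only [Matrix.add_mulVec, Matrix.sum_mulVec, Matrix.smul_mulVec, smul_sub, smul_smul,
      Finset.sum_sub_distrib, div_eq_mul_inv, Complex.ofReal_mul]
    abel
  · constructor
    · intro h
      rw [← Matrix.mulVec_mulVec, h, Matrix.mulVec_smul, Matrix.mulVec_mulVec,
        Matrix.nonsing_inv_mul _ hB_det, Matrix.one_mulVec]
    · intro h
      rw [← Matrix.mulVec_smul, ← h, Matrix.mulVec_mulVec,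
        Matrix.mul_nonsing_inv_cancel_left _ _ hB_det]
end

section
/- (Lemma 1, gradient form.) Let A_{c,1},…,A_{c,K}, B_{c,1},…,B_{c,K}, A_1,…,A_K, B_1,…,B_K be Hermitian positive definite matrices in ℂ^{n×n}, let τ > 0, and define L(w) = −τ·ln(Σ_{k=1}^K r_k(w)^{−1/(τ ln 2)}) + (1/ln 2)·Σ_{k=1}^K ln((w^H A_k w)/(w^H B_k w)) for nonzero w ∈ ℂ^n. Viewing ℂ^n as a real normed vector space, a nonzero w is a critical point of L (the real Fréchet derivative of L at w is the zero functional) if and only if A_KKT(w)·w = λ(w)·B_KKT(w)·w. -/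
open Matrix
open scoped ComplexOrder

section RealPairing

variable {ι : Type*} [Fintype ι]

/-- The real pairing on complex vectors: `u` is sent to the functional `h ↦ Re (h^H u)`. -/
noncomputable def rePairing : (ι → ℂ) →ₗ[ℝ] ((ι → ℂ) →L[ℝ] ℝ) where
  toFun u := LinearMap.toContinuousLinearMap
    { toFun := fun h => (star h ⬝ᵥ u).re
      map_add' := by intro x y; simp [add_dotProduct]
      map_smul' := by intro c x; simp [smul_dotProduct] }
  map_add' u v := by ext h; simp [dotProduct_add]
  map_smul' c u := by ext h; simp [dotProduct_smul]

@[simp]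
theorem rePairing_apply (u h : ι → ℂ) : rePairing u h = (star h ⬝ᵥ u).re := rfl

theorem rePairing_eq_zero_iff {u : ι → ℂ} : rePairing u = 0 ↔ u = 0 := by
  refine ⟨fun h => ?_, fun h => by rw [h, map_zero]⟩
  have h0 : (star u ⬝ᵥ u).re = 0 := by rw [← rePairing_apply, h]; rfl
  by_contra hu
  have hpos : 0 < star u ⬝ᵥ u := dotProduct_star_self_pos_iff.mpr hu
  exact (Complex.lt_def.mp hpos).1.ne' h0

/-- The quadratic form of a Hermitian matrix `M` has real gradient `2 M w`. -/
theorem Matrix.IsHermitian.hasFDerivAt_quadraticForm {M : Matrix ι ι ℂ} (hM : M.IsHermitian)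
    (w : ι → ℂ) :
    HasFDerivAt (fun v : ι → ℂ => (star v ⬝ᵥ M *ᵥ v).re) (rePairing ((2 : ℝ) • M *ᵥ w)) w := by
  have hc : HasFDerivAt (fun v : ι → ℂ => rePairing (M *ᵥ v))
      (LinearMap.toContinuousLinearMap (rePairing ∘ₗ M.mulVecLin.restrictScalars ℝ)) w :=
    (LinearMap.toContinuousLinearMap
      (rePairing ∘ₗ M.mulVecLin.restrictScalars ℝ)).hasFDerivAt
  refine (hc.clm_apply (hasFDerivAt_id w)).congr_fderiv ?_
  ext h
  have hsymm : (star w ⬝ᵥ M *ᵥ h).re = (star h ⬝ᵥ M *ᵥ w).re := by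
    have : star (star w ⬝ᵥ M *ᵥ h) = star h ⬝ᵥ M *ᵥ w := by
      rw [star_dotProduct, star_mulVec, hM.eq, star_star, dotProduct_mulVec]
    rw [← this]; simp
  simp [hsymm]
  ring

theorem Matrix.PosDef.re_quadraticForm_pos {M : Matrix ι ι ℂ} (hM : M.PosDef) {w : ι → ℂ}
    (hw : w ≠ 0) : 0 < (star w ⬝ᵥ M *ᵥ w).re :=
  (Complex.lt_def.mp (hM.dotProduct_mulVec_pos hw)).1

/-- The derivative of a Rayleigh quotient, expressed through its logarithmic gradient. -/
theorem hasFDerivAt_rayleighQuotient {M N : Matrix ι ι ℂ} (hM : M.PosDef) (hN : N.PosDef)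
    {w : ι → ℂ} (hw : w ≠ 0) {a b : ℝ} (ha : a = (star w ⬝ᵥ M *ᵥ w).re)
    (hb : b = (star w ⬝ᵥ N *ᵥ w).re) :
    HasFDerivAt (fun v : ι → ℂ => (star v ⬝ᵥ M *ᵥ v).re / (star v ⬝ᵥ N *ᵥ v).re)
      ((2 * (a / b)) • rePairing (a⁻¹ • M *ᵥ w - b⁻¹ • N *ᵥ w)) w := by
  have ha0 : a ≠ 0 := ha ▸ (hM.re_quadraticForm_pos hw).ne'
  have hb0 : b ≠ 0 := hb ▸ (hN.re_quadraticForm_pos hw).ne'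
  have hinv := (hasDerivAt_inv (hb ▸ hb0)).comp_hasFDerivAt w
    (hN.isHermitian.hasFDerivAt_quadraticForm w)
  refine ((hM.isHermitian.hasFDerivAt_quadraticForm w).mul hinv).congr_fderiv ?_
  simp only [Function.comp_apply, ← ha, ← hb]
  ext h
  simp only [map_sub, map_smul, _root_.add_apply, _root_.sub_apply, _root_.smul_apply, smul_eq_mul]
  field_simp
  ring

end RealPairing

/-- (Lemma 1, gradient form.) A nonzero `w` is a critical point of the smoothed
sum-spectral-efficiency objective `L` (its real Fréchet derivative at `w` is the zero
functional) iff `A_KKT(w) w = λ(w) B_KKT(w) w`. -/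
theorem lemma1_gradient_form
    (n K : ℕ) (hn : 0 < n) (hK : 0 < K)
    (Ac Bc A B : Fin K → Matrix (Fin n) (Fin n) ℂ)
    (hAcH : ∀ k, (Ac k).PosDef) (hBcH : ∀ k, (Bc k).PosDef)
    (hAH : ∀ k, (A k).PosDef) (hBH : ∀ k, (B k).PosDef)
    (τ : ℝ) (hτ : 0 < τ)
    (L : (Fin n → ℂ) → ℝ)
    (hL : ∀ v, L v =
      -τ * Real.log (∑ k, ((star v ⬝ᵥ (Ac k).mulVec v).re /
          (star v ⬝ᵥ (Bc k).mulVec v).re) ^ (-(1 / (τ * Real.log 2))))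
        + (1 / Real.log 2) * ∑ k, Real.log ((star v ⬝ᵥ (A k).mulVec v).re /
            (star v ⬝ᵥ (B k).mulVec v).re))
    (w : Fin n → ℂ) (hw : w ≠ 0)
    (qAc qBc qA qB : Fin K → ℝ)
    (hqAc : ∀ k, qAc k = (star w ⬝ᵥ (Ac k).mulVec w).re)
    (hqBc : ∀ k, qBc k = (star w ⬝ᵥ (Bc k).mulVec w).re)
    (hqA : ∀ k, qA k = (star w ⬝ᵥ (A k).mulVec w).re)
    (hqB : ∀ k, qB k = (star w ⬝ᵥ (B k).mulVec w).re)
    (r μ : Fin K → ℝ)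
    (hr : ∀ k, r k = qAc k / qBc k)
    (hμ : ∀ k, μ k = r k ^ (-(1 / (τ * Real.log 2))) /
      ∑ l, r l ^ (-(1 / (τ * Real.log 2))))
    (lamNum lamDen lam : ℝ)
    (hlamNum : lamNum = ∏ k, qA k)
    (hlamDen : lamDen =
      ((1 / (K * Real.log 2)) * ∑ k, r k ^ (-(1 / τ))) ^ (τ / Real.log 2) * ∏ k, qB k)
    (hlam : lam = lamNum / lamDen)
    (AKKT BKKT : Matrix (Fin n) (Fin n) ℂ)
    (hAKKT : AKKT = (lamNum : ℂ) •
      (∑ k, ((μ k / qAc k : ℝ) : ℂ) • Ac k + ∑ k, (((qA k)⁻¹ : ℝ) : ℂ) • A k))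
    (hBKKT : BKKT = (lamDen : ℂ) •
      (∑ k, ((μ k / qBc k : ℝ) : ℂ) • Bc k + ∑ k, (((qB k)⁻¹ : ℝ) : ℂ) • B k)) :
    fderiv ℝ L w = 0 ↔ AKKT.mulVec w = (lam : ℂ) • BKKT.mulVec w := by
  have hlog : Real.log 2 ≠ 0 := (Real.log_pos one_lt_two).ne'
  have hqAc0 : ∀ k, 0 < qAc k := fun k => hqAc k ▸ (hAcH k).re_quadraticForm_pos hw
  have hqBc0 : ∀ k, 0 < qBc k := fun k => hqBc k ▸ (hBcH k).re_quadraticForm_pos hw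
  have hqA0 : ∀ k, 0 < qA k := fun k => hqA k ▸ (hAH k).re_quadraticForm_pos hw
  have hqB0 : ∀ k, 0 < qB k := fun k => hqB k ▸ (hBH k).re_quadraticForm_pos hw
  have hr0 : ∀ k, 0 < r k := fun k => hr k ▸ div_pos (hqAc0 k) (hqBc0 k)
  have hne : (Finset.univ : Finset (Fin K)).Nonempty := ⟨⟨0, hK⟩, Finset.mem_univ _⟩
  have hS : 0 < ∑ l, r l ^ (-(1 / (τ * Real.log 2))) :=
    Finset.sum_pos (fun k _ => Real.rpow_pos_of_pos (hr0 k) _) hne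
  have hNum0 : lamNum ≠ 0 := hlamNum ▸ Finset.prod_ne_zero_iff.mpr fun k _ => (hqA0 k).ne'
  have hDen0 : lamDen ≠ 0 := by
    have hsum : 0 < ∑ k, r k ^ (-(1 / τ)) :=
      Finset.sum_pos (fun k _ => Real.rpow_pos_of_pos (hr0 k) _) hne
    have hprod : 0 < ∏ k, qB k := Finset.prod_pos fun k _ => hqB0 k
    have hlog' : 0 < Real.log 2 := Real.log_pos one_lt_two
    rw [hlamDen]
    positivity
  set gc : Fin K → Fin n → ℂ := fun k => (qAc k)⁻¹ • Ac k *ᵥ w - (qBc k)⁻¹ • Bc k *ᵥ w with hgc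
  set g : Fin K → Fin n → ℂ := fun k => (qA k)⁻¹ • A k *ᵥ w - (qB k)⁻¹ • B k *ᵥ w with hg
  have hrw : ∀ k, (star w ⬝ᵥ (Ac k).mulVec w).re / (star w ⬝ᵥ (Bc k).mulVec w).re = r k :=
    fun k => by rw [hr, hqAc, hqBc]
  have hcommon : HasFDerivAt (fun v : Fin n → ℂ => ∑ k, ((star v ⬝ᵥ (Ac k).mulVec v).re /
      (star v ⬝ᵥ (Bc k).mulVec v).re) ^ (-(1 / (τ * Real.log 2))))
      (∑ k, (-(1 / (τ * Real.log 2)) * r k ^ (-(1 / (τ * Real.log 2)) - 1)) •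
        (2 * r k) • rePairing (gc k)) w := by
    refine HasFDerivAt.fun_sum fun k _ => ?_
    have h := (hasFDerivAt_rayleighQuotient (hAcH k) (hBcH k) hw (hqAc k) (hqBc k)).rpow_const
      (p := -(1 / (τ * Real.log 2))) (Or.inl (by rw [hrw]; exact (hr0 k).ne'))
    rwa [hrw, ← hr] at h
  have hprivate : HasFDerivAt (fun v : Fin n → ℂ => ∑ k, Real.log
      ((star v ⬝ᵥ (A k).mulVec v).re / (star v ⬝ᵥ (B k).mulVec v).re))
      (∑ k, (qA k / qB k)⁻¹ • (2 * (qA k / qB k)) • rePairing (g k)) w := by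
    refine HasFDerivAt.fun_sum fun k _ => ?_
    have hq0 := (div_pos (hqA0 k) (hqB0 k)).ne'
    have h := (hasFDerivAt_rayleighQuotient (hAH k) (hBH k) hw (hqA k) (hqB k)).log
      (by rwa [← hqA, ← hqB])
    rwa [← hqA, ← hqB] at h
  have hderiv : HasFDerivAt L
      ((2 / Real.log 2) • rePairing (∑ k, μ k • gc k + ∑ k, g k)) w := by
    rw [funext hL]
    refine (((hcommon.log (by simp only [hrw]; exact hS.ne')).const_mul (-τ)).add
      (hprivate.const_mul (1 / Real.log 2))).congr_fderiv ?_
    simp only [hrw, map_add, map_sum, map_smul, smul_add, Finset.smul_sum, smul_smul]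
    congr 1 <;> refine Finset.sum_congr rfl fun k _ => ?_ <;> congr 1
    · rw [hμ, Real.rpow_sub_one (hr0 k).ne']
      have := (hr0 k).ne'
      field_simp
    · have := (hqA0 k).ne'
      have := (hqB0 k).ne'
      field_simp
  have hKKT : AKKT *ᵥ w - (lam : ℂ) • BKKT *ᵥ w =
      (lamNum : ℂ) • (∑ k, μ k • gc k + ∑ k, g k) := by
    have hmul : (lam : ℂ) * lamDen = lamNum := by
      rw [hlam, ← Complex.ofReal_mul, div_mul_cancel₀ _ hDen0]
    rw [hAKKT, hBKKT, smul_mulVec, smul_mulVec, smul_smul, hmul, ← smul_sub]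
    congr 1
    simp only [add_mulVec, sum_mulVec, smul_mulVec, Complex.coe_smul, hgc, hg, smul_sub,
      smul_smul, Finset.sum_sub_distrib, div_eq_mul_inv]
    abel
  rw [hderiv.fderiv, smul_eq_zero_iff_right (div_ne_zero two_ne_zero hlog),
    rePairing_eq_zero_iff, ← sub_eq_zero (a := AKKT *ᵥ w), hKKT,
    smul_eq_zero_iff_right (Complex.ofReal_ne_zero.mpr hNum0)]
end

section
/- (Key identity behind Proposition 1.) Let A_{c,1},…,A_{c,K}, B_{c,1},…,B_{c,K}, A_1,…,A_K, B_1,…,B_K be Hermitian positive definite matrices in ℂ^{n×n}, let τ > 0, and let w ∈ ℂ^n be nonzero. Then w^H A_KKT(w) w = (K+1)·λ_num(w) and w^H B_KKT(w) w = (K+1)·λ_den(w). Consequently, if w satisfies the nonlinear eigenvalue equation A_KKT(w)·w = λ̂·B_KKT(w)·w for some scalar λ̂, then λ̂ = λ(w) = λ_num(w)/λ_den(w); i.e., the eigenvalue associated with any eigenvector of B_KKT(w)^{−1}A_KKT(w) equals the value λ(w), so the leading eigenvector attains the largest value of λ among all such stationary points. -/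
open Matrix
open scoped ComplexOrder

/-- The quadratic form of a positive definite matrix at a nonzero vector is a positive real. -/
theorem Matrix.PosDef.re_quadForm_pos_and_eq {n : Type*} [Fintype n] {M : Matrix n n ℂ}
    (hM : M.PosDef) {w : n → ℂ} (hw : w ≠ 0) :
    0 < (star w ⬝ᵥ M *ᵥ w).re ∧ star w ⬝ᵥ M *ᵥ w = ((star w ⬝ᵥ M *ᵥ w).re : ℂ) := by
  obtain ⟨hre, him⟩ := Complex.pos_iff.mp (hM.dotProduct_mulVec_pos hw)
  exact ⟨hre, Complex.ext (by simp) (by simp [← him])⟩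

/-- Normalising each matrix by its own quadratic form turns the quadratic form of a combination
into the sum of the weights. -/
theorem Matrix.quadForm_smul_normalized_sum {n ι : Type*} [Fintype n] [Fintype ι]
    (M N : ι → Matrix n n ℂ) (w : n → ℂ) (p q μ : ι → ℝ)
    (hp : ∀ k, star w ⬝ᵥ M k *ᵥ w = (p k : ℂ)) (hq : ∀ k, star w ⬝ᵥ N k *ᵥ w = (q k : ℂ))
    (hp0 : ∀ k, p k ≠ 0) (hq0 : ∀ k, q k ≠ 0) (hμ : ∑ k, μ k = 1) (c : ℂ) :
    star w ⬝ᵥ (c • (∑ k, ((μ k / p k : ℝ) : ℂ) • M k + ∑ k, (((q k)⁻¹ : ℝ) : ℂ) • N k)) *ᵥ w =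
      ((Fintype.card ι : ℂ) + 1) * c := by
  have hM : ∀ k, ((μ k / p k : ℝ) : ℂ) * (p k : ℂ) = (μ k : ℂ) := fun k => by
    rw [← Complex.ofReal_mul, div_mul_cancel₀ _ (hp0 k)]
  have hN : ∀ k, (((q k)⁻¹ : ℝ) : ℂ) * (q k : ℂ) = 1 := fun k => by
    rw [← Complex.ofReal_mul, inv_mul_cancel₀ (hq0 k), Complex.ofReal_one]
  simp only [smul_mulVec, add_mulVec, sum_mulVec, dotProduct_smul, dotProduct_add,
    dotProduct_sum, hp, hq, smul_eq_mul, hM, hN]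
  rw [← Complex.ofReal_sum, hμ]
  simp
  ring

/-- (Key identity behind Proposition 1.) `wᴴ A_KKT(w) w = (K+1) λ_num(w)` and
`wᴴ B_KKT(w) w = (K+1) λ_den(w)`; consequently, if `A_KKT(w) w = λ̂ B_KKT(w) w` for some scalar
`λ̂`, then `λ̂ = λ(w) = λ_num(w)/λ_den(w)`. -/
theorem eigenvalue_equals_lambda
    (n K : ℕ) (hn : 0 < n) (hK : 0 < K)
    (Ac Bc A B : Fin K → Matrix (Fin n) (Fin n) ℂ)
    (hAcH : ∀ k, (Ac k).PosDef) (hBcH : ∀ k, (Bc k).PosDef)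
    (hAH : ∀ k, (A k).PosDef) (hBH : ∀ k, (B k).PosDef)
    (τ : ℝ) (hτ : 0 < τ)
    (w : Fin n → ℂ) (hw : w ≠ 0)
    (qAc qBc qA qB : Fin K → ℝ)
    (hqAc : ∀ k, qAc k = (star w ⬝ᵥ (Ac k).mulVec w).re)
    (hqBc : ∀ k, qBc k = (star w ⬝ᵥ (Bc k).mulVec w).re)
    (hqA : ∀ k, qA k = (star w ⬝ᵥ (A k).mulVec w).re)
    (hqB : ∀ k, qB k = (star w ⬝ᵥ (B k).mulVec w).re)
    (r μ : Fin K → ℝ)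
    (hr : ∀ k, r k = qAc k / qBc k)
    (hμ : ∀ k, μ k = r k ^ (-(1 / (τ * Real.log 2))) /
      ∑ l, r l ^ (-(1 / (τ * Real.log 2))))
    (lamNum lamDen : ℝ)
    (hlamNum : lamNum = ∏ k, qA k)
    (hlamDen : lamDen =
      ((1 / (K * Real.log 2)) * ∑ k, r k ^ (-(1 / τ))) ^ (τ / Real.log 2) * ∏ k, qB k)
    (AKKT BKKT : Matrix (Fin n) (Fin n) ℂ)
    (hAKKT : AKKT = (lamNum : ℂ) •
      (∑ k, ((μ k / qAc k : ℝ) : ℂ) • Ac k + ∑ k, (((qA k)⁻¹ : ℝ) : ℂ) • A k))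
    (hBKKT : BKKT = (lamDen : ℂ) •
      (∑ k, ((μ k / qBc k : ℝ) : ℂ) • Bc k + ∑ k, (((qB k)⁻¹ : ℝ) : ℂ) • B k)) :
    star w ⬝ᵥ AKKT.mulVec w = ((K : ℂ) + 1) * (lamNum : ℂ) ∧
      star w ⬝ᵥ BKKT.mulVec w = ((K : ℂ) + 1) * (lamDen : ℂ) ∧
      ∀ lamHat : ℂ, AKKT.mulVec w = lamHat • BKKT.mulVec w →
        lamHat = ((lamNum / lamDen : ℝ) : ℂ) := by
  have hAc := fun k => (hAcH k).re_quadForm_pos_and_eq hw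
  have hBc := fun k => (hBcH k).re_quadForm_pos_and_eq hw
  have hA := fun k => (hAH k).re_quadForm_pos_and_eq hw
  have hB := fun k => (hBH k).re_quadForm_pos_and_eq hw
  simp only [← hqAc] at hAc
  simp only [← hqBc] at hBc
  simp only [← hqA] at hA
  simp only [← hqB] at hB
  have : Nonempty (Fin K) := ⟨⟨0, hK⟩⟩
  have hr0 : ∀ k, 0 < r k := fun k => by
    rw [hr]
    exact div_pos (hAc k).1 (hBc k).1
  have hsum : ∀ e : ℝ, 0 < ∑ k, r k ^ e := fun e =>
    Finset.sum_pos (fun k _ => Real.rpow_pos_of_pos (hr0 k) e) Finset.univ_nonempty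
  have hμ1 : ∑ k, μ k = 1 := by
    simp only [hμ]
    rw [← Finset.sum_div, div_self (hsum _).ne']
  have hDen : 0 < lamDen := by
    have hlog : 0 < Real.log 2 := Real.log_pos one_lt_two
    have hK' : (0 : ℝ) < K := Nat.cast_pos.mpr hK
    rw [hlamDen]
    exact mul_pos (Real.rpow_pos_of_pos (mul_pos (by positivity) (hsum _)) _)
      (Finset.prod_pos fun k _ => (hB k).1)
  have hquadA : star w ⬝ᵥ AKKT.mulVec w = ((K : ℂ) + 1) * (lamNum : ℂ) := by
    rw [hAKKT, Matrix.quadForm_smul_normalized_sum Ac A w qAc qA μ (fun k => (hAc k).2)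
      (fun k => (hA k).2) (fun k => (hAc k).1.ne') (fun k => (hA k).1.ne') hμ1, Fintype.card_fin]
  have hquadB : star w ⬝ᵥ BKKT.mulVec w = ((K : ℂ) + 1) * (lamDen : ℂ) := by
    rw [hBKKT, Matrix.quadForm_smul_normalized_sum Bc B w qBc qB μ (fun k => (hBc k).2)
      (fun k => (hB k).2) (fun k => (hBc k).1.ne') (fun k => (hB k).1.ne') hμ1, Fintype.card_fin]
  refine ⟨hquadA, hquadB, fun lamHat h => ?_⟩
  have hK1 : (K : ℂ) + 1 ≠ 0 := Nat.cast_add_one_ne_zero K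
  have hDen' : (lamDen : ℂ) ≠ 0 := Complex.ofReal_ne_zero.mpr hDen.ne'
  rw [h, dotProduct_smul, hquadB, smul_eq_mul] at hquadA
  rw [Complex.ofReal_div, eq_div_iff hDen']
  exact mul_left_cancel₀ hK1 (by linear_combination hquadA)
end
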